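/- Let D be a dictionary in a real Hilbert space X whose symmetric convex hull co(D) is compact. Then sup_{f ∈ co(D)} E_n(f,D) ≤ (n! V_n)^{1/n} / √n · ε_n(co(D)) for all n ≥ 1. -/

import Mathlib

open scoped RealInnerProductSpace

/-- Dyadic entropy number: infimum of all `ε > 0` such that `K` is covered by `2^n`
balls of radius `ε`. -/
noncomputable def entropyNumber {X : Type*} [NormedAddCommGroup X] (n : ℕ) (K : Set X) : ℝ :=
  sInf {ε : ℝ | 0 < ε ∧ ∃ c : Fin (2 ^ n) → X, K ⊆ ⋃ i, Metric.closedBall (c i) ε}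

/-- Symmetric (absolutely) convex hull: closure of the set of finite sums `∑ cᵢ gᵢ`
with `gᵢ ∈ K` and `∑ |cᵢ| ≤ 1`. -/
noncomputable def symConvexHull {X : Type*} [NormedAddCommGroup X] [NormedSpace ℝ X]
    (K : Set X) : Set X :=
  closure {x : X | ∃ (m : ℕ) (c : Fin m → ℝ) (g : Fin m → X),
    (∀ i, g i ∈ K) ∧ (∑ i, |c i|) ≤ 1 ∧ x = ∑ i, c i • g i}

/-- Volume of the unit Euclidean ball in `ℝⁿ`. -/
noncomputable def unitBallVol (n : ℕ) : ℝ :=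
  Real.pi ^ ((n : ℝ) / 2) / Real.Gamma ((n : ℝ) / 2 + 1)

/-- Span of the first `n` terms of a sequence. -/
noncomputable def spanFirst {X : Type*} [NormedAddCommGroup X] [NormedSpace ℝ X]
    (f : ℕ → X) (n : ℕ) : Submodule ℝ X :=
  Submodule.span ℝ (f '' {i | i < n})

/-- The weak greedy algorithm with parameter `γ`: `f n` (the `(n+1)`-st iterate) lies in `K`
and its distance to the span of the previous iterates is at least `γ` times that of any
other element of `K`. -/
def IsWeakGreedy {X : Type*} [NormedAddCommGroup X] [NormedSpace ℝ X]
    (γ : ℝ) (K : Set X) (f : ℕ → X) : Prop :=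
  ∀ n : ℕ, f n ∈ K ∧ ∀ g ∈ K,
    γ * Metric.infDist g (spanFirst f n : Set X) ≤ Metric.infDist (f n) (spanFirst f n : Set X)

/-- The greedy error `σ_n(K) = sup_{f ∈ K} dist(f, span{f_1,…,f_n})`. -/
noncomputable def greedyError {X : Type*} [NormedAddCommGroup X] [NormedSpace ℝ X]
    (K : Set X) (f : ℕ → X) (n : ℕ) : ℝ :=
  sSup ((fun g => Metric.infDist g (spanFirst f n : Set X)) '' K)

/-- Kolmogorov `n`-width. -/
noncomputable def kolmogorovWidth {X : Type*} [NormedAddCommGroup X] [NormedSpace ℝ X]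
    (n : ℕ) (K : Set X) : ℝ :=
  sInf {d : ℝ | ∃ Y : Submodule ℝ X, FiniteDimensional ℝ Y ∧ Module.finrank ℝ Y ≤ n ∧
    d = sSup ((fun g => Metric.infDist g (Y : Set X)) '' K)}

/-- `f` admits an `ℓ¹` representation over the dictionary `D`. -/
def HasL1Rep {X : Type*} [NormedAddCommGroup X] [NormedSpace ℝ X] (D : Set X) (f : X) : Prop :=
  ∃ (c : ℕ → ℝ) (g : ℕ → X), (∀ i, g i ∈ D) ∧ Summable (fun i => |c i|) ∧
    HasSum (fun i => c i • g i) f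

/-- The variation norm `‖f‖_{L₁(D)}`. -/
noncomputable def varNorm {X : Type*} [NormedAddCommGroup X] [NormedSpace ℝ X]
    (D : Set X) (f : X) : ℝ :=
  sInf {t : ℝ | ∃ (c : ℕ → ℝ) (g : ℕ → X), (∀ i, g i ∈ D) ∧ Summable (fun i => |c i|) ∧
    HasSum (fun i => c i • g i) f ∧ t = ∑' i, |c i|}

/-- The orthogonal greedy algorithm with target `f`: `fa 0 = 0`; at each step `g n ∈ D`
maximizes `|⟨g, f - fa n⟩|` over `D`, and `fa (n+1)` is the orthogonal projection of `f`
onto `span{g 0, …, g n}`. -/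
def IsOGA {X : Type*} [NormedAddCommGroup X] [InnerProductSpace ℝ X]
    (D : Set X) (f : X) (g fa : ℕ → X) : Prop :=
  fa 0 = 0 ∧ ∀ n : ℕ,
    g n ∈ D ∧ (∀ h ∈ D, |⟪h, f - fa n⟫| ≤ |⟪g n, f - fa n⟫|) ∧
    fa (n + 1) ∈ Submodule.span ℝ (g '' {i | i ≤ n}) ∧
    ∀ w ∈ Submodule.span ℝ (g '' {i | i ≤ n}), ⟪f - fa (n + 1), w⟫ = 0

/-- Best `n`-term approximation error `E_n(f, D)`. -/
noncomputable def bestNTermError {X : Type*} [NormedAddCommGroup X] [NormedSpace ℝ X]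
    (D : Set X) (n : ℕ) (f : X) : ℝ :=
  sInf {r : ℝ | ∃ (c : Fin n → ℝ) (g : Fin n → X), (∀ i, g i ∈ D) ∧ r = ‖f - ∑ i, c i • g i‖}

/-- The K-functional `K(t, g)` between `X` and `L₁(D)`. -/
noncomputable def Kfunctional {X : Type*} [NormedAddCommGroup X] [NormedSpace ℝ X]
    (D : Set X) (t : ℝ) (gg : X) : ℝ :=
  sInf {s : ℝ | ∃ h : X, HasL1Rep D h ∧ s = ‖gg - h‖ + t * varNorm D h}

/-- The interpolation norm `‖g‖_θ = sup_{t > 0} t^{-θ} K(t, g)`. -/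
noncomputable def interpNorm {X : Type*} [NormedAddCommGroup X] [NormedSpace ℝ X]
    (D : Set X) (θ : ℝ) (gg : X) : ℝ :=
  sSup ((fun t => t ^ (-θ) * Kfunctional D t gg) '' Set.Ioi (0 : ℝ))

instance finiteDimensional_spanFirst {X : Type*} [NormedAddCommGroup X] [NormedSpace ℝ X]
    (g : ℕ → X) (k : ℕ) : FiniteDimensional ℝ (spanFirst g k) :=
  FiniteDimensional.span_of_finite ℝ ((Set.finite_lt_nat k).image g)

/-- The component of `f` orthogonal to the span of the first `k` terms of `g`. -/
noncomputable def spanResidual {X : Type*} [NormedAddCommGroup X] [InnerProductSpace ℝ X]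
    (g : ℕ → X) (k : ℕ) (f : X) : X :=
  f - (spanFirst g k).starProjection f

section Span

variable {X : Type*} [NormedAddCommGroup X] [InnerProductSpace ℝ X]

lemma mem_spanFirst (g : ℕ → X) {i k : ℕ} (h : i < k) : g i ∈ spanFirst g k :=
  Submodule.subset_span ⟨i, h, rfl⟩

lemma spanFirst_mono (g : ℕ → X) {i k : ℕ} (h : i ≤ k) : spanFirst g i ≤ spanFirst g k :=
  Submodule.span_mono (Set.image_mono fun _ hj => lt_of_lt_of_le hj h)

lemma spanFirst_congr {g g' : ℕ → X} {k : ℕ} (h : ∀ i < k, g i = g' i) :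
    spanFirst g k = spanFirst g' k :=
  congrArg (Submodule.span ℝ) (Set.image_congr h)

lemma spanResidual_congr {g g' : ℕ → X} {k : ℕ} (h : ∀ i < k, g i = g' i) (f : X) :
    spanResidual g k f = spanResidual g' k f := by
  unfold spanResidual
  congr 2
  simp only [spanFirst_congr h]

lemma inner_spanResidual_eq_zero (g : ℕ → X) (k : ℕ) (f : X) {w : X} (hw : w ∈ spanFirst g k) :
    ⟪spanResidual g k f, w⟫ = 0 :=
  Submodule.starProjection_inner_eq_zero f w hw

lemma sub_spanResidual_mem (g : ℕ → X) (k : ℕ) (f : X) :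
    f - spanResidual g k f ∈ spanFirst g k := by
  simp [spanResidual]

lemma inner_spanResidual_self (g : ℕ → X) (k : ℕ) (f : X) :
    ⟪spanResidual g k f, f⟫ = ‖spanResidual g k f‖ ^ 2 := by
  have h := inner_spanResidual_eq_zero g k f (sub_spanResidual_mem g k f)
  rw [inner_sub_right, real_inner_self_eq_norm_sq] at h
  linarith

lemma inner_spanResidual_spanResidual (g : ℕ → X) (k : ℕ) (f h : X) :
    ⟪spanResidual g k f, spanResidual g k h⟫ = ⟪spanResidual g k f, h⟫ := by
  have h0 := inner_spanResidual_eq_zero g k f (sub_spanResidual_mem g k h)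
  rw [inner_sub_right] at h0
  linarith

lemma norm_spanResidual_le (g : ℕ → X) (k : ℕ) (f : X) {w : X} (hw : w ∈ spanFirst g k) :
    ‖spanResidual g k f‖ ≤ ‖f - w‖ := by
  unfold spanResidual
  rw [Submodule.starProjection_minimal]
  exact ciInf_le ⟨0, Set.forall_mem_range.mpr fun _ => norm_nonneg _⟩
    (⟨w, hw⟩ : spanFirst g k)

lemma spanResidual_mem_spanFirst (g : ℕ → X) {i k : ℕ} (h : i < k) :
    spanResidual g i (g i) ∈ spanFirst g k := by
  have := spanFirst_mono g h.le (sub_spanResidual_mem g i (g i))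
  simpa using Submodule.sub_mem _ (mem_spanFirst g h) this

lemma norm_spanResidual_succ_sq_le (g : ℕ → X) (k : ℕ) (f : X)
    (hd : 0 < ‖spanResidual g k (g k)‖) :
    ‖spanResidual g (k + 1) f‖ ^ 2 ≤ ‖spanResidual g k f‖ ^ 2 -
      ⟪spanResidual g k f, g k⟫ ^ 2 / ‖spanResidual g k (g k)‖ ^ 2 := by
  set h := spanResidual g k (g k) with hh
  set r := spanResidual g k f with hr
  set t : ℝ := ⟪r, h⟫ / ‖h‖ ^ 2 with ht
  have hw : (f - r) + t • h ∈ spanFirst g (k + 1) :=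
    Submodule.add_mem _ (spanFirst_mono g k.le_succ (sub_spanResidual_mem g k f))
      (Submodule.smul_mem _ _ (spanResidual_mem_spanFirst g k.lt_succ_self))
  have h1 := norm_spanResidual_le g (k + 1) f hw
  have h2 : f - ((f - r) + t • h) = r - t • h := by abel
  rw [h2] at h1
  calc _ ≤ ‖r - t • h‖ ^ 2 := by gcongr
    _ = ‖r‖ ^ 2 - 2 * (t * ⟪r, h⟫) + t ^ 2 * ‖h‖ ^ 2 := by
        rw [norm_sub_sq_real, inner_smul_right, norm_smul, mul_pow, Real.norm_eq_abs, sq_abs]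
    _ = _ := by
        rw [← inner_spanResidual_spanResidual g k f (g k), ← hh, ← hr, ht]
        field_simp
        ring

end Span

section Dictionary

variable {X : Type*} [NormedAddCommGroup X] [InnerProductSpace ℝ X]

lemma sum_smul_mem_symConvexHull {D : Set X} {m : ℕ} {c : Fin m → ℝ} {g : Fin m → X}
    (hg : ∀ i, g i ∈ D) (hc : ∑ i, |c i| ≤ 1) : ∑ i, c i • g i ∈ symConvexHull D :=
  subset_closure ⟨m, c, g, hg, hc, rfl⟩

lemma inner_le_of_mem_symConvexHull {D : Set X} {r f : X} {b : ℝ} (hb : 0 ≤ b)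
    (h : ∀ g ∈ D, |⟪r, g⟫| ≤ b) (hf : f ∈ symConvexHull D) : ⟪r, f⟫ ≤ b := by
  have hcl : IsClosed {x : X | ⟪r, x⟫ ≤ b} :=
    isClosed_le (by fun_prop) continuous_const
  refine closure_minimal ?_ hcl hf
  rintro x ⟨m, c, g, hg, hc, rfl⟩
  simp only [Set.mem_ofPred_eq, inner_sum, inner_smul_right]
  calc ∑ i, c i * ⟪r, g i⟫ ≤ ∑ i, |c i| * b := by
        refine Finset.sum_le_sum fun i _ => ?_
        refine (le_abs_self _).trans ?_
        rw [abs_mul]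
        exact mul_le_mul_of_nonneg_left (h _ (hg i)) (abs_nonneg _)
    _ = (∑ i, |c i|) * b := by rw [Finset.sum_mul]
    _ ≤ b := mul_le_of_le_one_left hb hc

/-- A weak greedy selection rule can be followed for any finite number of steps. -/
lemma exists_weak_orthogonal_greedy {D : Set X} (hD : D.Nonempty) {f : X}
    (hf : f ∈ symConvexHull D) {γ : ℝ} (h0 : 0 < γ) (h1 : γ < 1) (n : ℕ) :
    ∃ g : ℕ → X, ∀ i < n, g i ∈ D ∧
      γ * ‖spanResidual g i f‖ ^ 2 ≤ |⟪spanResidual g i f, g i⟫| := by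
  induction n with
  | zero => exact ⟨fun _ => 0, by simp⟩
  | succ n ih =>
    obtain ⟨g, hg⟩ := ih
    obtain ⟨h, hhD, hh⟩ : ∃ h ∈ D,
        γ * ‖spanResidual g n f‖ ^ 2 ≤ |⟪spanResidual g n f, h⟫| := by
      by_contra! hcon
      have hlt := inner_le_of_mem_symConvexHull (by positivity) (fun h hh => (hcon h hh).le) hf
      rw [inner_spanResidual_self] at hlt
      obtain ⟨h, hh⟩ := hD
      have := (abs_nonneg _).trans_lt (hcon h hh)
      nlinarith [sq_nonneg ‖spanResidual g n f‖]
    have hagree : ∀ i < n, Function.update g n h i = g i := fun i hi =>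
      Function.update_of_ne hi.ne _ _
    refine ⟨Function.update g n h, fun i hi => ?_⟩
    rw [spanResidual_congr fun j hj => hagree j (by lia)]
    rcases Nat.lt_succ_iff_lt_or_eq.mp hi with hi | rfl
    · rw [hagree i hi]
      exact hg i hi
    · rw [Function.update_self]
      exact ⟨hhD, hh⟩

lemma bestNTermError_le_spanResidual {D : Set X} {n : ℕ} {g : ℕ → X} (hg : ∀ i < n, g i ∈ D)
    (f : X) : bestNTermError D n f ≤ ‖spanResidual g n f‖ := by
  have hmem := sub_spanResidual_mem g n f
  have hset : g '' {i | i < n} = Set.range fun i : Fin n => g i := by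
    ext x
    constructor
    · rintro ⟨i, hi, rfl⟩
      exact ⟨⟨i, hi⟩, rfl⟩
    · rintro ⟨i, rfl⟩
      exact ⟨i, i.2, rfl⟩
  rw [spanFirst, hset, Submodule.mem_span_range_iff_exists_fun] at hmem
  obtain ⟨c, hc⟩ := hmem
  refine csInf_le ⟨0, ?_⟩ ⟨c, fun i => g i, fun i => hg i i.2, ?_⟩
  · rintro r ⟨c, g, -, rfl⟩
    exact norm_nonneg _
  · rw [hc]
    simp

end Dictionary

section Volume

open MeasureTheory

lemma unitBallVol_pos (n : ℕ) : 0 < unitBallVol n :=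
  div_pos (Real.rpow_pos_of_pos Real.pi_pos _) (Real.Gamma_pos_of_pos (by positivity))

lemma volume_crossPolytope {n : ℕ} (hn : 1 ≤ n) :
    volume {x : Fin n → ℝ | ∑ i, |x i| ≤ 1} = ENNReal.ofReal (2 ^ n / n.factorial) := by
  have : Nonempty (Fin n) := ⟨⟨0, hn⟩⟩
  have h := volume_sum_rpow_le (Fin n) (le_refl (1 : ℝ)) 1
  have h2 : Real.Gamma (1 + 1) = 1 := by simpa using Real.Gamma_nat_eq_factorial 1
  simpa [h2, Real.Gamma_nat_eq_factorial] using h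

lemma volume_sum_sq_sub_le {n : ℕ} (hn : 1 ≤ n) (y : Fin n → ℝ) {ε : ℝ} (hε : 0 < ε) :
    volume {x : Fin n → ℝ | ∑ i, (x i - y i) ^ 2 ≤ ε ^ 2} =
      ENNReal.ofReal (ε ^ n * unitBallVol n) := by
  have : Nonempty (Fin n) := ⟨⟨0, hn⟩⟩
  have h := volume_sum_rpow_le (Fin n) one_le_two ε
  have hset : {x : Fin n → ℝ | ∑ i, (x i - y i) ^ 2 ≤ ε ^ 2} = (fun x => x + -y) ⁻¹'
      {x : Fin n → ℝ | (∑ i, |x i| ^ (2 : ℝ)) ^ (1 / (2 : ℝ)) ≤ ε} := by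
    ext x
    simp only [Set.mem_ofPred_eq, Set.mem_preimage, Real.rpow_two, sq_abs, ← sub_eq_add_neg,
      Pi.sub_apply, ← Real.sqrt_eq_rpow]
    rw [Real.sqrt_le_left hε.le]
  have hgamma : 2 * Real.Gamma (1 / 2 + 1) = Real.pi ^ (1 / 2 : ℝ) := by
    rw [Real.Gamma_add_one (by norm_num), Real.Gamma_one_half_eq, Real.sqrt_eq_rpow]
    ring
  rw [hset, measure_preimage_add_right, h, Fintype.card_fin, hgamma,
    ← ENNReal.ofReal_pow hε.le, ← ENNReal.ofReal_mul (by positivity), unitBallVol,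
    ← Real.rpow_natCast (Real.pi ^ (1 / 2 : ℝ)), ← Real.rpow_mul Real.pi_pos.le]
  congr 4
  ring

variable {X : Type*} [NormedAddCommGroup X] [InnerProductSpace ℝ X]

/-- Volume comparison: distances of successive dictionary elements to the preceding span are
controlled by coverings of the symmetric convex hull. -/
lemma prod_norm_spanResidual_le {D : Set X} {n : ℕ} (hn : 1 ≤ n) {g : ℕ → X}
    (hg : ∀ i < n, g i ∈ D) (hd : ∀ i < n, 0 < ‖spanResidual g i (g i)‖) {ε : ℝ} (hε : 0 < ε)
    {p : Fin (2 ^ n) → X} (hp : symConvexHull D ⊆ ⋃ i, Metric.closedBall (p i) ε) :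
    ∏ i : Fin n, ‖spanResidual g i (g i)‖ ≤ n.factorial * unitBallVol n * ε ^ n := by
  set d : Fin n → ℝ := fun i => ‖spanResidual g i (g i)‖ with hdd
  have hdpos : ∀ i, 0 < d i := fun i => hd i i.2
  set e : Fin n → X := fun i => (d i)⁻¹ • spanResidual g i (g i) with he
  have horth : ∀ (i : Fin n) (w : X), w ∈ spanFirst g i → ⟪e i, w⟫ = 0 := by
    intro i w hw
    rw [he, real_inner_smul_left, inner_spanResidual_eq_zero g i _ hw, mul_zero]
  have hmem : ∀ i j : Fin n, i < j → e i ∈ spanFirst g j := fun i j hij =>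
    Submodule.smul_mem _ _ (spanResidual_mem_spanFirst g hij)
  have hon : Orthonormal ℝ e := by
    refine ⟨fun i => ?_, fun i j hij => ?_⟩
    · rw [he, norm_smul, norm_inv, Real.norm_of_nonneg (hdpos i).le]
      exact inv_mul_cancel₀ (hdpos i).ne'
    · rcases lt_or_gt_of_ne hij with h | h
      · rw [real_inner_comm]
        exact horth j _ (hmem i j h)
      · exact horth i _ (hmem j i h)
  set A : Matrix (Fin n) (Fin n) ℝ := Matrix.of fun i j => ⟪e i, g j⟫ with hA
  have hdet : A.det = ∏ i, d i := by
    rw [Matrix.det_of_isUpperTriangular]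
    · refine Finset.prod_congr rfl fun i _ => ?_
      rw [hA, Matrix.of_apply, he, real_inner_smul_left, inner_spanResidual_self]
      change (d i)⁻¹ * d i ^ 2 = d i
      have := (hdpos i).ne'
      field_simp
    · intro i j hij
      exact horth i _ (mem_spanFirst g hij)
  have hcover : (Matrix.toLin' A) '' {x : Fin n → ℝ | ∑ i, |x i| ≤ 1} ⊆
      ⋃ k, {x : Fin n → ℝ | ∑ i, (x i - ⟪e i, p k⟫) ^ 2 ≤ ε ^ 2} := by
    rintro _ ⟨c, hc, rfl⟩
    obtain ⟨k, hk⟩ := Set.mem_iUnion.mp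
      (hp (sum_smul_mem_symConvexHull (fun i : Fin n => hg i i.2) hc))
    refine Set.mem_iUnion.mpr ⟨k, ?_⟩
    rw [Metric.mem_closedBall, dist_eq_norm] at hk
    have hbessel := hon.sum_inner_products_le (x := ∑ i, c i • g i - p k) (s := Finset.univ)
    refine le_trans (le_of_eq ?_) (hbessel.trans (pow_le_pow_left₀ (norm_nonneg _) hk 2))
    refine Finset.sum_congr rfl fun i _ => ?_
    rw [Real.norm_eq_abs, sq_abs, inner_sub_right, inner_sum]
    simp [Matrix.mulVec, dotProduct, hA, inner_smul_right, mul_comm]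
  have hvol := (measure_mono hcover).trans (measure_iUnion_le (μ := volume) _)
  rw [Measure.addHaar_image_linearMap, LinearMap.det_toLin', hdet, volume_crossPolytope hn,
    tsum_fintype, Finset.sum_congr rfl fun k _ => volume_sum_sq_sub_le hn _ hε,
    Finset.sum_const, Finset.card_univ, Fintype.card_fin, nsmul_eq_mul,
    abs_of_pos (Finset.prod_pos fun i _ => hdpos i),
    ← ENNReal.ofReal_mul (Finset.prod_nonneg fun i _ => (hdpos i).le), ← ENNReal.ofReal_natCast,
    ← ENNReal.ofReal_mul (Nat.cast_nonneg _),
    ENNReal.ofReal_le_ofReal_iff (by have := unitBallVol_pos n; positivity)] at hvol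
  push_cast at hvol
  rw [mul_div_assoc', div_le_iff₀ (by positivity)] at hvol
  refine le_of_mul_le_mul_right (hvol.trans_eq ?_) (by positivity : (0 : ℝ) < 2 ^ n)
  ring

end Volume

lemma inv_add_le_inv_of_le_sub {a a' u : ℝ} (ha : 0 < a) (ha' : 0 < a') (hu : 0 ≤ u)
    (h : a' ≤ a - u * a ^ 2) : a⁻¹ + u ≤ a'⁻¹ := by
  have h1 : a⁻¹ + u = (1 + u * a) / a := by field_simp
  rw [h1, inv_eq_one_div, div_le_div_iff₀ ha ha']
  calc (1 + u * a) * a' ≤ (1 + u * a) * (a - u * a ^ 2) := by gcongr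
    _ = 1 * a - (u * a) ^ 2 * a := by ring
    _ ≤ 1 * a := sub_le_self _ (by positivity)

/-- The arithmetic-geometric mean inequality for inverse squares. -/
lemma card_div_sq_prod_rpow_le_sum_inv_sq {n : ℕ} (hn : 1 ≤ n) {d : Fin n → ℝ}
    (hd : ∀ i, 0 < d i) :
    n / ((∏ i, d i) ^ ((n : ℝ)⁻¹)) ^ 2 ≤ ∑ i, (d i ^ 2)⁻¹ := by
  have hn' : (0 : ℝ) < n := by exact_mod_cast hn
  have h := Real.geom_mean_le_arith_mean_weighted Finset.univ (fun _ : Fin n => (n : ℝ)⁻¹)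
    (fun i => (d i ^ 2)⁻¹) (fun _ _ => by positivity) (by simp [hn'.ne'])
    (fun i _ => by positivity)
  rw [Real.finsetProd_rpow _ _ (fun i _ => by positivity), ← Finset.mul_sum,
    Finset.prod_inv_distrib, Finset.prod_pow, Real.inv_rpow (by positivity),
    ← Real.rpow_pow_comm (Finset.prod_nonneg fun i _ => (hd i).le), le_inv_mul_iff₀ hn'] at h
  rwa [div_eq_mul_inv]

section Greedy

variable {X : Type*} [NormedAddCommGroup X] [InnerProductSpace ℝ X]

lemma norm_spanResidual_antitone (g : ℕ → X) (f : X) {i k : ℕ} (h : i ≤ k) :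
    ‖spanResidual g k f‖ ≤ ‖spanResidual g i f‖ := by
  simpa using norm_spanResidual_le g k f (spanFirst_mono g h (sub_spanResidual_mem g i f))

/-- Error bound for the weak orthogonal greedy algorithm in terms of the distances of the selected
elements to the span of their predecessors. -/
lemma greedy_sum_le_inv_norm_sq {γ : ℝ} (h0 : 0 < γ) {n : ℕ} {g : ℕ → X} {f : X}
    (hg : ∀ i < n, γ * ‖spanResidual g i f‖ ^ 2 ≤ |⟪spanResidual g i f, g i⟫|)
    (hr : 0 < ‖spanResidual g n f‖) :
    (∀ i < n, 0 < ‖spanResidual g i (g i)‖) ∧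
      γ ^ 2 * ∑ i : Fin n, (‖spanResidual g i (g i)‖ ^ 2)⁻¹ ≤ (‖spanResidual g n f‖ ^ 2)⁻¹ := by
  have hpos : ∀ i ≤ n, 0 < ‖spanResidual g i f‖ := fun i hi =>
    hr.trans_le (norm_spanResidual_antitone g f hi)
  have hd : ∀ i < n, 0 < ‖spanResidual g i (g i)‖ := by
    intro i hi
    have hri := hpos i hi.le
    have h := hg i hi
    rw [← inner_spanResidual_spanResidual] at h
    have h2 := h.trans (abs_real_inner_le_norm _ _)
    exact pos_of_mul_pos_right ((by positivity : 0 < γ * ‖spanResidual g i f‖ ^ 2).trans_le h2)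
      hri.le
  refine ⟨hd, ?_⟩
  rw [Fin.sum_univ_eq_sum_range (fun i => (‖spanResidual g i (g i)‖ ^ 2)⁻¹)]
  have key : ∀ k ≤ n, γ ^ 2 * ∑ i ∈ Finset.range k, (‖spanResidual g i (g i)‖ ^ 2)⁻¹ ≤
      (‖spanResidual g k f‖ ^ 2)⁻¹ := by
    intro k
    induction k with
    | zero => intro _; simp
    | succ k ih =>
      intro hk
      have hdk := hd k hk
      have hstep := norm_spanResidual_succ_sq_le g k f hdk
      have hsq := pow_le_pow_left₀ (by positivity) (hg k hk) 2
      rw [sq_abs] at hsq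
      have hrec := inv_add_le_inv_of_le_sub (u := γ ^ 2 * (‖spanResidual g k (g k)‖ ^ 2)⁻¹)
        (pow_pos (hpos k (by lia)) 2) (pow_pos (hpos (k + 1) hk) 2) (by positivity) (by
          refine hstep.trans (sub_le_sub_left ?_ _)
          rw [div_eq_mul_inv]
          calc _ = (γ * ‖spanResidual g k f‖ ^ 2) ^ 2 * (‖spanResidual g k (g k)‖ ^ 2)⁻¹ := by
                ring
            _ ≤ _ := by gcongr)
      rw [Finset.sum_range_succ, mul_add]
      linarith [ih (by lia)]
  exact key n le_rfl

lemma mul_bestNTermError_le {D : Set X} (hD : D.Nonempty) {n : ℕ} (hn : 1 ≤ n) {f : X}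
    (hf : f ∈ symConvexHull D) {γ : ℝ} (h0 : 0 < γ) (h1 : γ < 1) {ε : ℝ} (hε : 0 < ε)
    {p : Fin (2 ^ n) → X} (hp : symConvexHull D ⊆ ⋃ i, Metric.closedBall (p i) ε) :
    γ * bestNTermError D n f ≤
      ((n.factorial : ℝ) * unitBallVol n) ^ ((n : ℝ)⁻¹) / Real.sqrt n * ε := by
  obtain ⟨g, hg⟩ := exists_weak_orthogonal_greedy hD hf h0 h1 n
  have hV := unitBallVol_pos n
  have hn' : (0 : ℝ) < n := by exact_mod_cast hn
  have hE := bestNTermError_le_spanResidual (fun i hi => (hg i hi).1) f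
  refine (mul_le_mul_of_nonneg_left hE h0.le).trans ?_
  rcases (norm_nonneg (spanResidual g n f)).eq_or_lt' with hr | hr
  · rw [hr, mul_zero]
    positivity
  obtain ⟨hd, hsum⟩ := greedy_sum_le_inv_norm_sq h0 (fun i hi => (hg i hi).2) hr
  have hprod := prod_norm_spanResidual_le hn (fun i hi => (hg i hi).1) hd hε hp
  have hamgm := card_div_sq_prod_rpow_le_sum_inv_sq hn (fun i : Fin n => hd i i.2)
  have hPpos : 0 < ∏ i : Fin n, ‖spanResidual g i (g i)‖ :=
    Finset.prod_pos fun i _ => hd i i.2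
  set P := ∏ i : Fin n, ‖spanResidual g i (g i)‖
  have hGpos : 0 < P ^ ((n : ℝ)⁻¹) := Real.rpow_pos_of_pos hPpos _
  have hG : P ^ ((n : ℝ)⁻¹) ≤ (n.factorial * unitBallVol n) ^ ((n : ℝ)⁻¹) * ε := by
    refine (Real.rpow_le_rpow hPpos.le hprod (by positivity)).trans_eq ?_
    rw [Real.mul_rpow (by positivity) (by positivity), Real.pow_rpow_inv_natCast hε.le (by lia)]
  rw [div_mul_eq_mul_div]
  refine le_trans ?_ (div_le_div_of_nonneg_right hG (Real.sqrt_nonneg _))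
  have h := (mul_le_mul_of_nonneg_left hamgm (sq_nonneg γ)).trans hsum
  refine (sq_le_sq₀ (by positivity) (by positivity)).mp ?_
  rw [mul_pow, div_pow, Real.sq_sqrt hn'.le]
  rw [mul_div_assoc', div_le_iff₀ (by positivity), inv_mul_eq_div, le_div_iff₀ (by positivity)] at h
  rw [le_div_iff₀ hn']
  linarith

end Greedy

/-- uniform entropy-based bound for best `n`-term approximation over the
symmetric convex hull of the dictionary. -/
theorem sup_bestNTermError_le_entropy
    {X : Type*} [NormedAddCommGroup X] [InnerProductSpace ℝ X] [CompleteSpace X]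
    (D : Set X) (hD : IsCompact (symConvexHull D)) (n : ℕ) (hn : 1 ≤ n) :
    sSup (bestNTermError D n '' symConvexHull D)
      ≤ ((n.factorial : ℝ) * unitBallVol n) ^ ((n : ℝ)⁻¹) / Real.sqrt n *
          entropyNumber n (symConvexHull D) := by
  have hV := unitBallVol_pos n
  have hn' : (0 : ℝ) < n := by exact_mod_cast hn
  have hC : 0 < ((n.factorial : ℝ) * unitBallVol n) ^ ((n : ℝ)⁻¹) / Real.sqrt n := by positivity
  set C := ((n.factorial : ℝ) * unitBallVol n) ^ ((n : ℝ)⁻¹) / Real.sqrt n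
  have hne : {ε : ℝ | 0 < ε ∧ ∃ c : Fin (2 ^ n) → X,
      symConvexHull D ⊆ ⋃ i, Metric.closedBall (c i) ε}.Nonempty := by
    obtain ⟨R, hR, hsub⟩ := hD.isBounded.subset_closedBall_lt 0 0
    exact ⟨R, hR, fun _ => 0, fun x hx =>
      Set.mem_iUnion.mpr ⟨⟨0, Nat.two_pow_pos n⟩, hsub hx⟩⟩
  rw [← div_le_iff₀' hC]
  refine le_csInf hne ?_
  rintro ε ⟨hε, p, hp⟩
  rw [div_le_iff₀' hC]
  refine Real.sSup_le ?_ (by positivity)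
  rintro _ ⟨f, hf, rfl⟩
  rcases D.eq_empty_or_nonempty with rfl | hDne
  · have hempty : bestNTermError (∅ : Set X) n f = 0 := by
      rw [bestNTermError, ← Real.sInf_empty]
      congr 1
      ext r
      simp only [Set.mem_ofPred_eq, Set.mem_empty_iff_false, iff_false]
      rintro ⟨c, g, hg, -⟩
      exact hg ⟨0, hn⟩
    rw [hempty]
    positivity
  · have hlim : Filter.Tendsto (fun γ : ℝ => γ * bestNTermError D n f) (nhdsWithin 1 (Set.Iio 1))
        (nhds (1 * bestNTermError D n f)) :=
      ((continuous_id.mul continuous_const).tendsto 1).mono_left nhdsWithin_le_nhds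
    rw [one_mul] at hlim
    refine le_of_tendsto hlim ?_
    filter_upwards [Ioo_mem_nhdsLT (zero_lt_one' ℝ)] with γ hγ
    exact mul_bestNTermError_le hDne hn hf hγ.1 hγ.2 hε hp
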